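/- Let S be a graded reduced affine monoid and S̃ the associated monoid. Suppose the defining congruence ∼_S is generated by {(x^λ, x^μ) : (λ,μ) ∈ Λ} for some Λ ⊆ ℕ₀^{𝒜(S)} × ℕ₀^{𝒜(S)}. For each λ appearing in a pair of Λ and each 0 ≤ i ≤ δ̄, where δ̄ ranges over 0 ≤ i ≤ |a^λ|, choose λ[i] ∈ ℕ₀^{𝒜(S̃)} with κ(λ[i]) = λ and δ(λ[i]) = i. Then the defining congruence ∼_{S̃} of S̃ is generated by the pairs (x^{λ[i]}, x^{μ[i]}) for (λ,μ) ∈ Λ and 0 ≤ i ≤ |a^λ|, together with the pairs (x_{a[k]} x_{b[l]}, x_{a[k+1]} x_{b[l−1]}) for a, b ∈ 𝒜(S), 0 ≤ k ≤ |a| − 1, 1 ≤ l ≤ |b|. -/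

import Mathlib

/-!
The congruence `c` generated by the lifted pairs and the quadratic relations is contained in
`∼_{S̃}` because `gdegE w α = w (fac α)` depends only on `fac α`, so that both sides of a pair in
`Λ` admit the same range of lifts.

For the converse, the quadratic relations alone already identify any two `x`, `y` with the same
`κ` and the same `δ` (`con_of_kap_eq`): if `a[i]` occurs in `x` and `a[j]` in `y` with `i ≤ j`, the
missing `j - i` units of `δ` can be moved from the rest of `x` onto `a[i]` (`con_shift`), after
which `a[j]` is split off both sides. Consequently, whether `x` and `y` are `c`-related depends
only on `κ` and `δ`, and the relation on exponent vectors of `S` "same graded degree, and all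
lifts with equal `δ` are `c`-related" is itself a congruence (`liftCon`); transitivity and
additivity use that an exponent vector has lifts of every `δ` up to its graded degree
(`exists_lift`). This congruence contains `Λ`, hence `∼_S`, which is the claim.
-/

/-! ## Common definitions: atoms, factorizations, catenary degrees -/

/-- An atom of an additive commutative monoid: a nonzero element that cannot be
written as a sum of two nonzero elements. -/
def IsAtm {S : Type*} [AddCommMonoid S] (a : S) : Prop :=
  a ≠ 0 ∧ ∀ b c : S, a = b + c → b = 0 ∨ c = 0

/-- The set of atoms of an additive commutative monoid. -/
def Atoms (S : Type*) [AddCommMonoid S] : Set S := {a | IsAtm a}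

/-- Exponent vectors: the free commutative monoid on the set of atoms (written additively). -/
abbrev FreeExp (S : Type*) [AddCommMonoid S] := ↥(Atoms S) →₀ ℕ

/-- The factorization homomorphism, sending an exponent vector `α` to `a^α ∈ S`. -/
def fac {S : Type*} [AddCommMonoid S] (α : FreeExp S) : S :=
  α.sum fun a n => n • (a : S)

lemma fac_add {S : Type*} [AddCommMonoid S] (α β : FreeExp S) :
    fac (α + β) = fac α + fac β :=
  Finsupp.sum_add_index' (fun _ => zero_nsmul _) (fun a m n => add_nsmul (a : S) m n)

/-- Total degree (length) `|α|` of an exponent vector. -/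
def degE {σ : Type*} (α : σ →₀ ℕ) : ℕ := α.sum fun _ n => n

/-- Pointwise minimum (the gcd in the free commutative monoid). -/
noncomputable def gcdE {σ : Type*} (α β : σ →₀ ℕ) : σ →₀ ℕ :=
  Finsupp.zipWith min (min_self 0) α β

/-- The distance `d(α,γ)` between two exponent vectors. -/
noncomputable def dDist {σ : Type*} (α β : σ →₀ ℕ) : ℕ :=
  max (degE (α - gcdE α β)) (degE (β - gcdE α β))

/-- `α` and `γ` can be connected by a `d`-chain. -/
def ChainConn {S : Type*} [AddCommMonoid S] (d : ℕ) (α γ : FreeExp S) : Prop :=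
  ∃ (k : ℕ) (c : ℕ → FreeExp S), c 0 = α ∧ c k = γ ∧
    ∀ j < k, fac (c j) = fac (c (j + 1)) ∧ dDist (c j) (c (j + 1)) ≤ d

/-- The catenary degree of `S`. -/
noncomputable def catDeg (S : Type*) [AddCommMonoid S] : ℕ :=
  sInf {d | ∀ α γ : FreeExp S, fac α = fac γ → ChainConn d α γ}

/-- Graded degree `|α|_gr` of an exponent vector, w.r.t. a weight (grading) `w` on `S`. -/
def gdegE {S : Type*} [AddCommMonoid S] (w : S → ℕ) (α : FreeExp S) : ℕ :=
  α.sum fun a n => n * w (a : S)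

/-- The graded distance `d_gr(α,γ)`. -/
noncomputable def dDistGr {S : Type*} [AddCommMonoid S] (w : S → ℕ) (α β : FreeExp S) : ℕ :=
  max (gdegE w (α - gcdE α β)) (gdegE w (β - gcdE α β))

/-- `α` and `γ` can be connected by a chain of weight at most `d`. -/
def ChainConnGr {S : Type*} [AddCommMonoid S] (w : S → ℕ) (d : ℕ) (α γ : FreeExp S) : Prop :=
  ∃ (k : ℕ) (c : ℕ → FreeExp S), c 0 = α ∧ c k = γ ∧
    ∀ j < k, fac (c j) = fac (c (j + 1)) ∧ dDistGr w (c j) (c (j + 1)) ≤ d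

/-- The graded catenary degree of `S` w.r.t. the grading `w`. -/
noncomputable def catDegGr (S : Type*) [AddCommMonoid S] (w : S → ℕ) : ℕ :=
  sInf {d | ∀ α γ : FreeExp S, fac α = fac γ → ChainConnGr w d α γ}

/-- The defining congruence `∼_S` of `S` on the free commutative monoid on the atoms. -/
def defCon (S : Type*) [AddCommMonoid S] : AddCon (FreeExp S) where
  r α β := fac α = fac β
  iseqv := ⟨fun _ => rfl, Eq.symm, Eq.trans⟩
  add' := fun {a b c d} h1 h2 => by
    have h1' : fac a = fac b := h1
    have h2' : fac c = fac d := h2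
    show fac (a + c) = fac (b + d)
    rw [fac_add, fac_add, h1', h2']

/-- A reduced affine monoid: commutative, cancellative, a finitely generated monoid embedding
into a finitely generated free abelian group, whose only unit is the identity. -/
class IsReducedAffine (S : Type*) [AddCommMonoid S] : Prop where
  cancel : ∀ a b c : S, a + b = a + c → b = c
  affine : ∃ (k : ℕ) (f : S →+ (Fin k → ℤ)), Function.Injective f
  fg : AddMonoid.FG S
  reduced : ∀ s : S, IsAddUnit s → s = 0

/-! ## The tilde construction -/

/-- The atoms of `S̃`: pairs `a[i]` with `a` an atom of `S` and `0 ≤ i ≤ |a|`. -/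
def ATil (S : Type*) [AddCommMonoid S] (w : S → ℕ) : Type _ :=
  {p : ↥(Atoms S) × ℕ // p.2 ≤ w (p.1 : S)}

/-- Constructor `a[i]` for atoms of `S̃`. -/
def atil {S : Type*} [AddCommMonoid S] (w : S → ℕ) (a : ↥(Atoms S)) (i : ℕ)
    (h : i ≤ w (a : S)) : ATil S w := ⟨(a, i), h⟩

/-- The map `κ : ℕ₀^{𝒜(S̃)} → ℕ₀^{𝒜(S)}`, `κ(λ)(a) = Σ_i λ(a[i])`. -/
noncomputable def kap (S : Type*) [AddCommMonoid S] (w : S → ℕ) :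
    (ATil S w →₀ ℕ) → FreeExp S :=
  Finsupp.mapDomain fun p => p.val.1

/-- The map `δ : ℕ₀^{𝒜(S̃)} → ℕ₀`, `δ(λ) = Σ i·λ(a[i])`. -/
def delt {S : Type*} [AddCommMonoid S] (w : S → ℕ) (l : ATil S w →₀ ℕ) : ℕ :=
  l.sum fun p n => n * p.val.2

lemma kap_add {S : Type*} [AddCommMonoid S] (w : S → ℕ) (l m : ATil S w →₀ ℕ) :
    kap S w (l + m) = kap S w l + kap S w m := Finsupp.mapDomain_add

lemma delt_add {S : Type*} [AddCommMonoid S] (w : S → ℕ) (l m : ATil S w →₀ ℕ) :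
    delt w (l + m) = delt w l + delt w m :=
  Finsupp.sum_add_index' (fun _ => zero_mul _) (fun _ m n => add_mul m n _)

/-- The defining congruence of `S̃` (under the identification `𝒜(S̃) = {a[i]}`,
`x^λ ∼_{S̃} x^μ` iff `a^{κλ} = a^{κμ}` in `S` and `δλ = δμ`). -/
def defConTil (S : Type*) [AddCommMonoid S] (w : S → ℕ) : AddCon (ATil S w →₀ ℕ) where
  r l m := fac (kap S w l) = fac (kap S w m) ∧ delt w l = delt w m
  iseqv := ⟨fun _ => ⟨rfl, rfl⟩, fun h => ⟨h.1.symm, h.2.symm⟩,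
    fun h h' => ⟨h.1.trans h'.1, h.2.trans h'.2⟩⟩
  add' := fun h1 h2 =>
    ⟨by rw [kap_add, kap_add, fac_add, fac_add, h1.1, h2.1],
     by rw [delt_add, delt_add, h1.2, h2.2]⟩

/-- The quadratic relations `(x_{a[k]} x_{b[l]}, x_{a[k+1]} x_{b[l-1]})`,
for `a, b ∈ 𝒜(S)`, `0 ≤ k ≤ |a| - 1`, `1 ≤ l ≤ |b|`. -/
def quadRel (S : Type*) [AddCommMonoid S] (w : S → ℕ) :
    (ATil S w →₀ ℕ) → (ATil S w →₀ ℕ) → Prop := fun x y =>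
  ∃ (a b : ↥(Atoms S)) (k l : ℕ) (hk : k + 1 ≤ w (a : S)) (_ : 1 ≤ l) (hl : l ≤ w (b : S)),
    x = Finsupp.single (atil w a k (Nat.le_of_succ_le hk)) 1 +
        Finsupp.single (atil w b l hl) 1 ∧
    y = Finsupp.single (atil w a (k + 1) hk) 1 +
        Finsupp.single (atil w b (l - 1) (le_trans (Nat.sub_le l 1) hl)) 1

/-! ## Block monoids -/

/-- The block monoid `ℬ(g)` of a tuple `g = (g₁,…,g_m)` of elements of a commutative
monoid `G`. -/
def BlockT {G : Type*} [CommMonoid G] {m : ℕ} (g : Fin m → G) :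
    AddSubmonoid (Fin m → ℕ) where
  carrier := {α | ∏ i, g i ^ α i = 1}
  zero_mem' := by simp
  add_mem' := by
    intro a b ha hb
    simp only [Set.mem_setOf_eq] at *
    show ∏ i, g i ^ (a i + b i) = 1
    simp [pow_add, Finset.prod_mul_distrib, ha, hb]

/-- The block monoid `ℬ(G₀)` of a subset `G₀` of a commutative monoid `G`. -/
noncomputable def BlockS {G : Type*} [CommMonoid G] (G₀ : Set G) : AddSubmonoid (G₀ →₀ ℕ) where
  carrier := {α | (α.prod fun x n => (x : G) ^ n) = 1}
  zero_mem' := by simp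
  add_mem' := by
    intro a b ha hb
    simp only [Set.mem_setOf_eq] at *
    rw [Finsupp.prod_add_index' (fun x => pow_zero _) (fun x m n => pow_add _ m n), ha, hb,
      one_mul]

/-- The monoid `S̃` for `S = ℬ(g)` graded by the last coordinate. -/
def TildeB {G : Type*} [CommMonoid G] {m : ℕ} (g : Fin (m + 1) → G) :
    AddSubmonoid ((Fin (m + 1) → ℕ) × ℕ) where
  carrier := {p | p.1 ∈ BlockT g ∧ p.2 ≤ p.1 (Fin.last m)}
  zero_mem' := ⟨(BlockT g).zero_mem, le_rfl⟩
  add_mem' := by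
    intro a b ha hb
    exact ⟨(BlockT g).add_mem ha.1 hb.1, add_le_add ha.2 hb.2⟩

/-- The Davenport constant `D(G₀)`: the maximal length of an atom of `ℬ(G₀)`. -/
noncomputable def DavenportC {G : Type*} [CommMonoid G] (G₀ : Set G) : ℕ :=
  sSup {k | ∃ γ : ↥(BlockS G₀), IsAtm γ ∧ degE (γ : G₀ →₀ ℕ) = k}

/-- The little Davenport constant `d(G₀)`: the maximal length of a sequence over `G₀`
containing no product-one subsequence. -/
noncomputable def littleDav {G : Type*} [CommMonoid G] (G₀ : Set G) : ℕ :=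
  sSup {k | ∃ α : G₀ →₀ ℕ, degE α = k ∧
    ∀ γ : ↥(BlockS G₀), IsAtm γ → ∃ x : G₀, α x < (γ : G₀ →₀ ℕ) x}

/-! ## Gröbner systems -/

/-- An admissible total order (given as a strict order relation) on a free commutative
monoid, written additively. -/
def IsAdmissible {F : Type*} [AddCommMonoid F] (lt : F → F → Prop) : Prop :=
  (∀ x y, lt x y ∨ x = y ∨ lt y x) ∧ (∀ x y z, lt x y → lt y z → lt x z) ∧
  (∀ x, ¬ lt x x) ∧ (∀ x y z, lt x y → lt (x + z) (y + z)) ∧ (∀ x, x ≠ 0 → lt 0 x)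

/-- `Λ` is a Gröbner system of the congruence `c` with respect to the order `lt`. -/
def IsGroebnerSystem {F : Type*} [AddCommMonoid F] (lt : F → F → Prop) (c : AddCon F)
    (Λ : Set (F × F)) : Prop :=
  Λ.Finite ∧ (∀ p ∈ Λ, c p.1 p.2 ∧ lt p.2 p.1) ∧
  (∀ z : F, (∀ p ∈ Λ, ¬ ∃ u, z = p.1 + u) → ∀ y, c z y → z = y ∨ lt z y)

/-- The ordering on positions `a[i]` induced by an enumeration of the atoms. -/
def posLt {S : Type*} [AddCommMonoid S] {w : S → ℕ} {n : ℕ} (e : Fin n ≃ ↥(Atoms S))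
    (q p : ATil S w) : Prop :=
  e.symm q.val.1 < e.symm p.val.1 ∨ (e.symm q.val.1 = e.symm p.val.1 ∧ q.val.2 < p.val.2)

/-- The admissible order on the free commutative monoid on `𝒜(S̃)` extending the order
`lt` on the free commutative monoid on `𝒜(S)`. -/
def ltTil {S : Type*} [AddCommMonoid S] (w : S → ℕ) (lt : FreeExp S → FreeExp S → Prop)
    {n : ℕ} (e : Fin n ≃ ↥(Atoms S)) (mu lam : ATil S w →₀ ℕ) : Prop :=
  lt (kap S w mu) (kap S w lam) ∨
  (kap S w mu = kap S w lam ∧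
    ∃ p : ATil S w, lam p < mu p ∧ ∀ q : ATil S w, posLt e q p → mu q = lam q)

/-- The set `Γ₂` of pairs `(x_{a[i]} x_{b[j]}, x_{a[i-1]} x_{b[j+1]})` with `x_a ≺ x_b`,
`0 < i ≤ |a|`, `0 ≤ j < |b|`. -/
def Gam2 (S : Type*) [AddCommMonoid S] (w : S → ℕ) (lt : FreeExp S → FreeExp S → Prop) :
    Set ((ATil S w →₀ ℕ) × (ATil S w →₀ ℕ)) :=
  {pr | ∃ (a b : ↥(Atoms S)) (i j : ℕ) (_ : 0 < i) (hi : i ≤ w (a : S)) (hj : j + 1 ≤ w (b : S)),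
    lt (Finsupp.single a 1) (Finsupp.single b 1) ∧
    pr = (Finsupp.single (atil w a i hi) 1 +
            Finsupp.single (atil w b j (Nat.le_of_succ_le hj)) 1,
          Finsupp.single (atil w a (i - 1) (le_trans (Nat.sub_le i 1) hi)) 1 +
            Finsupp.single (atil w b (j + 1) hj) 1)}

/-- The set `Γ₃` of pairs `(x_{a[i]} x_{a[j]}, x_{a[i-1]} x_{a[j+1]})` with `0 < i ≤ j < |a|`. -/
def Gam3 (S : Type*) [AddCommMonoid S] (w : S → ℕ) :
    Set ((ATil S w →₀ ℕ) × (ATil S w →₀ ℕ)) :=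
  {pr | ∃ (a : ↥(Atoms S)) (i j : ℕ) (_ : 0 < i) (hij : i ≤ j) (hj : j + 1 ≤ w (a : S)),
    pr = (Finsupp.single (atil w a i (le_trans hij (Nat.le_of_succ_le hj))) 1 +
            Finsupp.single (atil w a j (Nat.le_of_succ_le hj)) 1,
          Finsupp.single (atil w a (i - 1)
              (le_trans (Nat.sub_le i 1) (le_trans hij (Nat.le_of_succ_le hj)))) 1 +
            Finsupp.single (atil w a (j + 1) hj) 1)}

/-! ## The presentation homomorphism for semigroup rings -/

/-- The homomorphism `π_R : R[x_a : a ∈ 𝒜(S)] → R[S]`, `x_a ↦ a`. -/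
noncomputable def piR (R : Type*) (S : Type*) [CommRing R] [AddCommMonoid S] :
    MvPolynomial ↥(Atoms S) R →ₐ[R] AddMonoidAlgebra R S :=
  MvPolynomial.aeval fun a => AddMonoidAlgebra.single (a : S) 1

/-! ### Additivity and lifts -/

section Presentation

variable {S : Type*} [AddCommMonoid S] {w : S → ℕ}

lemma gdegE_add (w : S → ℕ) (α β : FreeExp S) :
    gdegE w (α + β) = gdegE w α + gdegE w β :=
  Finsupp.sum_add_index' (fun _ => zero_mul _) (fun _ m n => add_mul m n _)

lemma gdegE_single (w : S → ℕ) (a : Atoms S) (n : ℕ) :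
    gdegE w (Finsupp.single a n) = n * w a :=
  Finsupp.sum_single_index (zero_mul _)

lemma kap_single (p : ATil S w) (n : ℕ) :
    kap S w (Finsupp.single p n) = Finsupp.single p.val.1 n :=
  Finsupp.mapDomain_single

lemma delt_single (p : ATil S w) (n : ℕ) :
    delt w (Finsupp.single p n) = n * p.val.2 :=
  Finsupp.sum_single_index (zero_mul _)

lemma kap_atil (a : Atoms S) (i : ℕ) (hi : i ≤ w a) :
    kap S w (Finsupp.single (atil w a i hi) 1) = Finsupp.single a 1 :=
  kap_single _ _

lemma delt_atil (a : Atoms S) (i : ℕ) (hi : i ≤ w a) :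
    delt w (Finsupp.single (atil w a i hi) 1) = i :=
  (delt_single _ _).trans (one_mul i)

/-- The graded degree of a factorization is the degree of the factored element. -/
lemma gdegE_eq_fac (hw : ∀ s t : S, w (s + t) = w s + w t) (α : FreeExp S) :
    gdegE w α = w (fac α) := by
  have h0 : w 0 = 0 := by
    have := hw 0 0
    rw [add_zero] at this
    omega
  have hn : ∀ (n : ℕ) (s : S), w (n • s) = n * w s := by
    intro n s
    induction n with
    | zero => simp [h0]
    | succ n ih => rw [succ_nsmul, hw, ih, Nat.succ_mul]
  induction α using Finsupp.induction_linear with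
  | zero => simp [gdegE, fac, h0]
  | add f g hf hg => rw [gdegE_add, fac_add, hw, hf, hg]
  | single a n =>
    have hfac : fac (Finsupp.single a n) = n • (a : S) :=
      Finsupp.sum_single_index (zero_nsmul _)
    rw [gdegE_single, hfac, hn]

lemma delt_le_gdegE (x : ATil S w →₀ ℕ) : delt w x ≤ gdegE w (kap S w x) := by
  induction x using Finsupp.induction_linear with
  | zero => simp [delt]
  | add f g hf hg => rw [delt_add, kap_add, gdegE_add]; omega
  | single p n =>
    rw [delt_single, kap_single, gdegE_single]
    exact Nat.mul_le_mul_left n p.2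

/-- Every exponent vector `α` has lifts of all `δ`-values `0 ≤ i ≤ |α|_gr`. -/
lemma exists_lift (w : S → ℕ) (α : FreeExp S) :
    ∀ i ≤ gdegE w α, ∃ x, kap S w x = α ∧ delt w x = i := by
  have hadd : ∀ f g : FreeExp S,
      (∀ i ≤ gdegE w f, ∃ x, kap S w x = f ∧ delt w x = i) →
      (∀ i ≤ gdegE w g, ∃ x, kap S w x = g ∧ delt w x = i) →
      ∀ i ≤ gdegE w (f + g), ∃ x, kap S w x = f + g ∧ delt w x = i := by
    intro f g hf hg i hi
    rw [gdegE_add] at hi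
    obtain ⟨x, hx, hx'⟩ := hf (min i (gdegE w f)) (min_le_right _ _)
    obtain ⟨y, hy, hy'⟩ := hg (i - min i (gdegE w f)) (by omega)
    exact ⟨x + y, by rw [kap_add, hx, hy], by rw [delt_add, hx', hy']; omega⟩
  have h0 : ∀ i ≤ gdegE w (0 : FreeExp S), ∃ x, kap S w x = 0 ∧ delt w x = i := by
    intro i hi
    refine ⟨0, by simp [kap], ?_⟩
    have : i = 0 := by simpa [gdegE] using hi
    simp [delt, this]
  induction α using Finsupp.induction_linear with
  | zero => exact h0
  | add f g hf hg => exact hadd f g hf hg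
  | single a n =>
    induction n with
    | zero => simpa using h0
    | succ n ih =>
      rw [Finsupp.single_add]
      refine hadd _ _ ih fun i hi => ?_
      rw [gdegE_single, one_mul] at hi
      exact ⟨Finsupp.single (atil w a i hi) 1, kap_atil a i hi, delt_atil a i hi⟩

/-! ### The quadratic relations identify all lifts with equal `κ` and `δ` -/

lemma exists_eq_single_add {σ : Type*} {x : σ →₀ ℕ} {p : σ} (h : x p ≠ 0) :
    ∃ x', x = Finsupp.single p 1 + x' := by
  refine ⟨x - Finsupp.single p 1, (add_tsub_cancel_of_le ?_).symm⟩
  rw [Finsupp.single_le_iff]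
  omega

/-- A lift of positive `δ` contains some `b[l]` with `l ≥ 1`. -/
lemma exists_pos_of_delt {x : ATil S w →₀ ℕ} (h : delt w x ≠ 0) :
    ∃ (b : Atoms S) (l : ℕ) (hl : l ≤ w b), x (atil w b l hl) ≠ 0 ∧ 1 ≤ l := by
  by_contra! hc
  refine h (Finset.sum_eq_zero fun p hp => ?_)
  have : p.val.2 = 0 := by have := hc p.val.1 p.val.2 p.2 (Finsupp.mem_support_iff.mp hp); omega
  simp [this]

/-- Quadratic relations move `n` units of `δ` from the rest `x` of a word onto `a[i]`. -/
lemma con_shift {c : AddCon (ATil S w →₀ ℕ)} (hc : ∀ x y, quadRel S w x y → c x y)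
    (a : Atoms S) (i n : ℕ) (hi : i + n ≤ w a) (x : ATil S w →₀ ℕ) (hx : n ≤ delt w x) :
    ∃ x', kap S w x' = kap S w x ∧ delt w x' + n = delt w x ∧
      c (Finsupp.single (atil w a i (by omega)) 1 + x)
        (Finsupp.single (atil w a (i + n) hi) 1 + x') := by
  induction n with
  | zero => exact ⟨x, rfl, rfl, c.refl _⟩
  | succ n ih =>
    obtain ⟨x', hk, hd, hcx⟩ := ih (by omega) (by omega)
    obtain ⟨b, l, hl, hp, hp1⟩ := exists_pos_of_delt (x := x') (by omega)
    obtain ⟨z, rfl⟩ := exists_eq_single_add hp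
    refine ⟨Finsupp.single (atil w b (l - 1) (by omega)) 1 + z, ?_, ?_, ?_⟩
    · rw [← hk, kap_add, kap_add, kap_atil, kap_atil]
    · rw [← hd, delt_add, delt_add, delt_atil, delt_atil]
      omega
    · refine c.trans hcx ?_
      have := c.add (hc _ _ ⟨a, b, i + n, l, hi, hp1, hl, rfl, rfl⟩) (c.refl z)
      rwa [add_assoc, add_assoc] at this

/-- A congruence containing the quadratic relations identifies any two words with the same
`κ` and the same `δ`. -/
lemma con_of_kap_eq {c : AddCon (ATil S w →₀ ℕ)} (hc : ∀ x y, quadRel S w x y → c x y)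
    {x y : ATil S w →₀ ℕ} (hk : kap S w x = kap S w y) (hd : delt w x = delt w y) :
    c x y := by
  -- Induct on the common length of `x` and `y`, read off from `κ` to keep their roles symmetric.
  induction hn : (kap S w x).degree generalizing x y with
  | zero =>
    have key : ∀ z : ATil S w →₀ ℕ, (kap S w z).degree = 0 → z = 0 := by
      intro z hz
      by_contra hne
      obtain ⟨p, hp⟩ := Finsupp.ne_iff.mp hne
      obtain ⟨z', rfl⟩ := exists_eq_single_add hp
      rw [kap_add, kap_single, map_add, Finsupp.degree_single] at hz
      omega
    rw [key x hn, key y (hk ▸ hn)]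
    exact c.refl 0
  | succ n ih =>
    have hne : kap S w x ≠ 0 := by
      intro h
      simp [h] at hn
    obtain ⟨a, ha⟩ := Finsupp.ne_iff.mp hne
    have split : ∀ z : ATil S w →₀ ℕ, kap S w z a ≠ 0 →
        ∃ i, ∃ hi : i ≤ w a, ∃ z', z = Finsupp.single (atil w a i hi) 1 + z' := by
      classical
      intro z hz
      obtain ⟨p, hp, rfl⟩ := Finset.mem_image.mp
        (Finsupp.mapDomain_support (Finsupp.mem_support_iff.mpr hz))
      exact ⟨p.val.2, p.2, exists_eq_single_add (Finsupp.mem_support_iff.mp hp)⟩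
    -- The case where the `a[i]` split off `u` has the smaller index.
    have main : ∀ (i j : ℕ) (hi : i ≤ w a) (hj : j ≤ w a) (u v : ATil S w →₀ ℕ), i ≤ j →
        kap S w u = kap S w v → i + delt w u = j + delt w v → (kap S w u).degree = n →
        c (Finsupp.single (atil w a i hi) 1 + u) (Finsupp.single (atil w a j hj) 1 + v) := by
      intro i j hi hj u v hij hkuv hduv hnu
      obtain ⟨m, rfl⟩ := Nat.exists_eq_add_of_le hij
      obtain ⟨u', hku, hdu, hcu⟩ := con_shift hc a i m hj u (by omega)
      refine c.trans hcu (c.add (c.refl _) (ih (hku.trans hkuv) (by omega) ?_))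
      rw [hku, hnu]
    obtain ⟨i, hi, u, rfl⟩ := split x ha
    obtain ⟨j, hj, v, rfl⟩ := split y (hk ▸ ha)
    rw [kap_add, kap_atil, map_add, Finsupp.degree_single] at hn
    rw [kap_add, kap_add, kap_atil, kap_atil] at hk
    rw [delt_add, delt_add, delt_atil, delt_atil] at hd
    have hk' : kap S w u = kap S w v := add_left_cancel hk
    rcases le_total i j with h | h
    · exact main i j hi hj u v h hk' hd (by omega)
    · exact c.symm (main j i hj hi v u h hk'.symm hd.symm (by rw [← hk']; omega))

/-! ### Descending a congruence to exponent vectors of `S` -/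

/-- The relation "`α` and `β` have the same graded degree, and any two lifts of `α` and `β` with
equal `δ` are `c`-related", which is a congruence as soon as `c` contains the quadratic
relations. -/
def liftCon (c : AddCon (ATil S w →₀ ℕ)) (hc : ∀ x y, quadRel S w x y → c x y) :
    AddCon (FreeExp S) where
  r α β := gdegE w α = gdegE w β ∧
    ∀ x y, kap S w x = α → kap S w y = β → delt w x = delt w y → c x y
  iseqv :=
    { refl := fun _ => ⟨rfl, fun _ _ hx hy hd => con_of_kap_eq hc (hx.trans hy.symm) hd⟩
      symm := fun h => ⟨h.1.symm, fun x y hx hy hd => c.symm (h.2 y x hy hx hd.symm)⟩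
      trans := by
        rintro α β γ ⟨h1, h1'⟩ ⟨h2, h2'⟩
        refine ⟨h1.trans h2, fun x y hx hy hd => ?_⟩
        obtain ⟨z, hz, hz'⟩ := exists_lift w β (delt w x)
          (by rw [← h1, ← hx]; exact delt_le_gdegE x)
        exact c.trans (h1' x z hx hz hz'.symm) (h2' z y hz hy (hz'.trans hd)) }
  add' := by
    rintro α β α' β' ⟨h1, h1'⟩ ⟨h2, h2'⟩
    refine ⟨by rw [gdegE_add, gdegE_add, h1, h2], fun x y hx hy hd => ?_⟩
    have hle := delt_le_gdegE x
    rw [hx, gdegE_add] at hle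
    -- Distribute `δ x` over the two summands and lift each of them separately.
    obtain ⟨i, j, hi, hj, hij⟩ :
        ∃ i j, i ≤ gdegE w α ∧ j ≤ gdegE w α' ∧ i + j = delt w x :=
      ⟨min (delt w x) (gdegE w α), delt w x - min (delt w x) (gdegE w α),
        by omega, by omega, by omega⟩
    obtain ⟨x1, hx1, hx1'⟩ := exists_lift w α i hi
    obtain ⟨x2, hx2, hx2'⟩ := exists_lift w α' j hj
    obtain ⟨y1, hy1, hy1'⟩ := exists_lift w β i (h1 ▸ hi)
    obtain ⟨y2, hy2, hy2'⟩ := exists_lift w β' j (h2 ▸ hj)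
    have hxx : c x (x1 + x2) :=
      con_of_kap_eq hc (by rw [hx, kap_add, hx1, hx2]) (by rw [delt_add]; omega)
    have hyy : c (y1 + y2) y :=
      con_of_kap_eq hc (by rw [hy, kap_add, hy1, hy2]) (by rw [delt_add]; omega)
    exact c.trans hxx (c.trans (c.add (h1' x1 y1 hx1 hy1 (by omega))
      (h2' x2 y2 hx2 hy2 (by omega))) hyy)

end Presentation

/-- Theorem 4.4: a presentation of `S̃` is obtained from a presentation
of `S` by lifting each defining pair in all admissible `δ`-values and adding the
quadratic relations. -/
theorem tildeS_presentation (S : Type) [AddCommMonoid S] [IsReducedAffine S]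
    (w : S → ℕ) (hw : ∀ s t : S, w (s + t) = w s + w t)
    (Λ : Set (FreeExp S × FreeExp S))
    (hΛ : addConGen (fun x y => (x, y) ∈ Λ) = defCon S)
    (lift : FreeExp S → ℕ → (ATil S w →₀ ℕ))
    (hlift : ∀ lam : FreeExp S, ((∃ mu, (lam, mu) ∈ Λ) ∨ (∃ mu, (mu, lam) ∈ Λ)) →
      ∀ i ≤ gdegE w lam, kap S w (lift lam i) = lam ∧ delt w (lift lam i) = i) :
    addConGen (fun x y =>
      (∃ lam mu, (lam, mu) ∈ Λ ∧ ∃ i, i ≤ gdegE w lam ∧ x = lift lam i ∧ y = lift mu i) ∨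
      quadRel S w x y) = defConTil S w := by
  have hΛfac : ∀ lam mu, (lam, mu) ∈ Λ → fac lam = fac mu := by
    intro lam mu h
    have : addConGen (fun x y => (x, y) ∈ Λ) lam mu := AddConGen.Rel.of _ _ h
    rw [hΛ] at this
    exact this
  have hΛdeg : ∀ lam mu, (lam, mu) ∈ Λ → gdegE w lam = gdegE w mu := by
    intro lam mu h
    rw [gdegE_eq_fac hw, gdegE_eq_fac hw, hΛfac lam mu h]
  apply le_antisymm
  · refine AddCon.addConGen_le.mpr ?_
    rintro x y (⟨lam, mu, h, i, hi, rfl, rfl⟩ | ⟨a, b, k, l, hk, h1, hl, rfl, rfl⟩)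
    · obtain ⟨hk1, hd1⟩ := hlift lam (Or.inl ⟨mu, h⟩) i hi
      obtain ⟨hk2, hd2⟩ := hlift mu (Or.inr ⟨lam, h⟩) i (hΛdeg lam mu h ▸ hi)
      exact ⟨by rw [hk1, hk2, hΛfac lam mu h], by rw [hd1, hd2]⟩
    · refine ⟨?_, ?_⟩
      · simp only [kap_add, kap_atil]
      · simp only [delt_add, delt_atil]
        omega
  · set c := addConGen (fun x y =>
      (∃ lam mu, (lam, mu) ∈ Λ ∧ ∃ i, i ≤ gdegE w lam ∧ x = lift lam i ∧ y = lift mu i) ∨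
      quadRel S w x y)
    have hq : ∀ x y, quadRel S w x y → c x y := fun x y h => AddConGen.Rel.of _ _ (Or.inr h)
    have hle : defCon S ≤ liftCon c hq := by
      rw [← hΛ]
      refine AddCon.addConGen_le.mpr fun lam mu h => ⟨hΛdeg lam mu h, fun x y hx hy hd => ?_⟩
      have hi : delt w x ≤ gdegE w lam := hx ▸ delt_le_gdegE x
      obtain ⟨hk1, hd1⟩ := hlift lam (Or.inl ⟨mu, h⟩) _ hi
      obtain ⟨hk2, hd2⟩ := hlift mu (Or.inr ⟨lam, h⟩) _ (hΛdeg lam mu h ▸ hi)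
      have hrel : c (lift lam (delt w x)) (lift mu (delt w x)) :=
        AddConGen.Rel.of _ _ (Or.inl ⟨lam, mu, h, _, hi, rfl, rfl⟩)
      exact c.trans (con_of_kap_eq hq (hx.trans hk1.symm) hd1.symm)
        (c.trans hrel (con_of_kap_eq hq (hk2.trans hy.symm) (hd2.trans hd)))
    rintro x y ⟨hf, hd⟩
    exact (hle hf).2 x y rfl rfl hd
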